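/- For every D ∈ 𝓔_∞, the restriction of the equivalence relation E_1^tail to the cube [∅,D] = {A ∈ 𝓔_∞ : A ≤ D} is Borel bireducible with the equivalence relation E_1 on 2^{ℕ×ℕ}. -/

import Mathlib

open Classical

/-- The space `𝓔_∞` of equivalence relations on `ℕ` with infinitely many classes
(infinite partitions of `ℕ`). -/
def Einf : Type := {A : Setoid ℕ // Infinite (Quotient A)}

namespace Einf

/-- `Coarsen A B` (written `A ≤ B` in the paper): `A` is a coarsening of `B`,
i.e. every `A`-class is a union of `B`-classes. -/
def Coarsen (A B : Einf) : Prop := ∀ i j : ℕ, B.1 i j → A.1 i j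

/-- `μ_n(A)`: the `(n+1)`-st smallest minimal representative of an `A`-class. -/
noncomputable def mu (A : Einf) (n : ℕ) : ℕ :=
  Nat.nth (fun k => ∀ m, A.1 m k → k ≤ m) n

/-- `𝓔_∞^fin`: equivalence relations on initial segments `{0,…,k−1}` of `ℕ`. -/
def FinApprox : Type := Σ k : ℕ, Setoid (Fin k)

/-- `r_n(A)`: the restriction of `A` to `{0,…,μ_n(A)−1}`. -/
noncomputable def rn (A : Einf) (n : ℕ) : FinApprox :=
  ⟨A.mu n, Setoid.comap (fun i => (i : ℕ)) A.1⟩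

/-- `s ⊑ A`: `s` is an initial approximation of `A`, i.e. `s = r_n(A)` for some `n`. -/
def InitSeg (s : FinApprox) (A : Einf) : Prop := ∃ n, rn A n = s

/-- The Ellentuck cube `[s, A] = {B ∈ 𝓔_∞ : s ⊑ B and B ≤ A}`. -/
def cube (s : FinApprox) (A : Einf) : Set Einf := {B | InitSeg s B ∧ Coarsen B A}

/-- The identification of `𝓔_∞` with `𝓒𝓢 ⊆ 2^{ℕ×ℕ}`: `toCS A n m = 1` iff
`m` is `A`-equivalent to `μ_n(A)` (so the `n`-th row is the `A`-class of `μ_n(A)`). -/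
noncomputable def toCS (A : Einf) : ℕ → ℕ → Bool :=
  fun n m => decide (A.1 m (A.mu n))

/-- The Borel structure of the Polish topology on `𝓔_∞`, pulled back from `2^{ℕ×ℕ}`. -/
noncomputable instance : MeasurableSpace Einf :=
  MeasurableSpace.comap toCS inferInstance

/-- `𝓧 ⊆ 𝓔_∞` is Ramsey null. -/
def RamseyNull (X : Set Einf) : Prop :=
  ∀ s A, (cube s A).Nonempty → ∃ B ∈ cube s A, cube s B ∩ X = ∅

/-- `𝓧 ⊆ 𝓔_∞` is Ramsey conull: its complement is Ramsey null. -/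
def RamseyConull (X : Set Einf) : Prop := RamseyNull Xᶜ

end Einf

open Einf

/-- The equivalence relation `E₁` on `2^{ℕ×ℕ}`. -/
def E1 (x y : ℕ → ℕ → Bool) : Prop := ∃ n₀ : ℕ, ∀ n m : ℕ, x (n₀ + n) m = y (n₀ + n) m

/-- The equivalence relation `E₁^tail` on `2^{ℕ×ℕ}`. -/
def E1tail (x y : ℕ → ℕ → Bool) : Prop :=
  ∃ nx ny : ℕ, ∀ n m : ℕ, x (nx + n) m = y (ny + n) m

/-- `k` is the minimum of its `A`-class. -/
def IsMinRep (A : Einf) (k : ℕ) : Prop := ∀ m, A.1 m k → k ≤ m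

theorem exists_minRep (A : Einf) (i : ℕ) : ∃ k, A.1 k i ∧ IsMinRep A k ∧ k ≤ i := by
  have h : ∃ k, A.1 k i := ⟨i, A.1.refl i⟩
  refine ⟨Nat.find h, Nat.find_spec h, ?_, Nat.find_min' h (A.1.refl i)⟩
  intro m hm
  exact Nat.find_min' h (A.1.trans hm (Nat.find_spec h))

theorem minRep_unique (A : Einf) {k l : ℕ} (hk : IsMinRep A k) (hl : IsMinRep A l)
    (h : A.1 k l) : k = l :=
  le_antisymm (hk _ (A.1.symm h)) (hl _ h)

theorem infinite_minRep (A : Einf) : (setOf (IsMinRep A)).Infinite := by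
  intro hfin
  have := hfin.to_subtype
  have hi := A.2
  have hs : Function.Surjective
      (fun k : setOf (IsMinRep A) => (Quotient.mk A.1 k.1 : Quotient A.1)) := by
    intro q
    induction q using Quotient.inductionOn with
    | h i =>
      obtain ⟨k, hk, hk', _⟩ := exists_minRep A i
      exact ⟨⟨k, hk'⟩, Quotient.sound hk⟩
  have := Finite.of_surjective _ hs
  exact not_finite (Quotient A.1)

theorem mu_eq (A : Einf) (n : ℕ) : A.mu n = Nat.nth (IsMinRep A) n := rfl

theorem mu_strictMono (A : Einf) : StrictMono A.mu :=
  Nat.nth_strictMono (infinite_minRep A)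

theorem mu_minRep (A : Einf) (n : ℕ) : IsMinRep A (A.mu n) :=
  Nat.nth_mem_of_infinite (infinite_minRep A) n

theorem exists_mu (A : Einf) {k : ℕ} (hk : IsMinRep A k) : ∃ n, A.mu n = k := by
  have : k ∈ Set.range (Nat.nth (IsMinRep A)) := by
    rw [Nat.range_nth_of_infinite (infinite_minRep A)]; exact hk
  exact this

/-- The row with minimum `k` placed at position `k`. -/
noncomputable def rowMap (A : Einf) : ℕ → ℕ → Bool :=
  fun k m => decide (IsMinRep A k ∧ A.1 m k)

theorem rowMap_iff (A : Einf) (k m : ℕ) : rowMap A k m = true ↔ IsMinRep A k ∧ A.1 m k := by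
  simp [rowMap]

theorem toCS_iff (A : Einf) (k m : ℕ) : toCS A k m = true ↔ A.1 m (A.mu k) := by
  simp [toCS]

theorem rowMap_mu (A : Einf) (n m : ℕ) : rowMap A (A.mu n) m = toCS A n m := by
  rw [Bool.eq_iff_iff, rowMap_iff, toCS_iff]
  exact and_iff_right (mu_minRep A n)

theorem mu_tail_le {A A' : Einf} {a b : ℕ}
    (h : ∀ m, toCS A a m = toCS A' b m) : A'.mu b ≤ A.mu a := by
  apply mu_minRep A' b
  rw [← toCS_iff, ← h, toCS_iff]

theorem rowMap_tail {A A' : Einf} {nx ny : ℕ}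
    (h : ∀ n m, toCS A (nx + n) m = toCS A' (ny + n) m) (k m : ℕ) (hk : A.mu nx ≤ k)
    (hf : rowMap A k m = true) : rowMap A' k m = true := by
  obtain ⟨j, rfl⟩ := exists_mu A ((rowMap_iff A k m).1 hf).1
  obtain ⟨n, rfl⟩ := Nat.exists_eq_add_of_le ((mu_strictMono A).le_iff_le.1 hk)
  have e : A.mu (nx + n) = A'.mu (ny + n) :=
    le_antisymm (mu_tail_le fun m => (h n m).symm) (mu_tail_le fun m => h n m)
  rw [rowMap_mu, h] at hf
  rwa [e, rowMap_mu]

theorem range_mu_tail (A : Einf) (K : ℕ) :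
    Set.range (fun n => A.mu (Nat.count (IsMinRep A) K + n)) = {k | K ≤ k ∧ IsMinRep A k} := by
  ext k
  constructor
  · rintro ⟨n, rfl⟩
    refine ⟨?_, mu_minRep A _⟩
    refine le_trans ?_ ((mu_strictMono A).monotone (Nat.le_add_right _ n))
    exact Nat.le_nth_count (infinite_minRep A) K
  · rintro ⟨h1, h2⟩
    have hc := Nat.count_monotone (IsMinRep A) h1
    obtain ⟨n, hn⟩ := Nat.exists_eq_add_of_le hc
    refine ⟨n, ?_⟩
    simp only [← hn, mu_eq]
    exact Nat.nth_count h2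

theorem E1tail_iff_rowMap (A A' : Einf) :
    E1tail (toCS A) (toCS A') ↔ E1 (rowMap A) (rowMap A') := by
  constructor
  · rintro ⟨nx, ny, h⟩
    refine ⟨max (A.mu nx) (A'.mu ny), fun n m => ?_⟩
    rw [Bool.eq_iff_iff]
    exact ⟨rowMap_tail h _ _ (by omega), rowMap_tail (fun n m => (h n m).symm) _ _ (by omega)⟩
  · rintro ⟨K, h⟩
    have hmin : ∀ k, K ≤ k → (IsMinRep A k ↔ IsMinRep A' k) := by
      intro k hk
      obtain ⟨n, rfl⟩ := Nat.exists_eq_add_of_le hk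
      have := h n (K + n)
      rw [Bool.eq_iff_iff, rowMap_iff, rowMap_iff] at this
      constructor
      · intro hh; exact (this.1 ⟨hh, A.1.refl _⟩).1
      · intro hh; exact (this.2 ⟨hh, A'.1.refl _⟩).1
    refine ⟨Nat.count (IsMinRep A) K, Nat.count (IsMinRep A') K, fun n m => ?_⟩
    have e : (fun n => A.mu (Nat.count (IsMinRep A) K + n))
        = (fun n => A'.mu (Nat.count (IsMinRep A') K + n)) := by
      rw [← StrictMono.range_inj, range_mu_tail, range_mu_tail]
      · ext k
        exact and_congr_right (hmin k)
      · intro a b hab; exact mu_strictMono A (by omega)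
      · intro a b hab; exact mu_strictMono A' (by omega)
    have e1 := congrFun e n
    have hK : K ≤ A.mu (Nat.count (IsMinRep A) K + n) := by
      have : A.mu (Nat.count (IsMinRep A) K + n) ∈ {k | K ≤ k ∧ IsMinRep A k} := by
        rw [← range_mu_tail]; exact ⟨n, rfl⟩
      exact this.1
    obtain ⟨j, hj⟩ := Nat.exists_eq_add_of_le hK
    rw [← rowMap_mu, ← rowMap_mu, ← e1, hj, h]

theorem measurable_toCS : Measurable toCS := comap_measurable _

theorem rel_iff (A : Einf) (i j : ℕ) :
    A.1 i j ↔ ∃ n, toCS A n i = true ∧ toCS A n j = true := by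
  constructor
  · intro h
    obtain ⟨k, hk, hk', _⟩ := exists_minRep A j
    obtain ⟨n, rfl⟩ := exists_mu A hk'
    exact ⟨n, (toCS_iff _ _ _).2 (A.1.trans h (A.1.symm hk)), (toCS_iff _ _ _).2 (A.1.symm hk)⟩
  · rintro ⟨n, h1, h2⟩
    rw [toCS_iff] at h1 h2
    exact A.1.trans h1 (A.1.symm h2)

theorem measurableSet_toCS (n i : ℕ) : MeasurableSet {A : Einf | toCS A n i = true} := by
  have : Measurable fun A : Einf => toCS A n i :=
    (measurable_pi_apply i).comp ((measurable_pi_apply n).comp measurable_toCS)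
  exact this (measurableSet_singleton true)

theorem measurableSet_rel (i j : ℕ) : MeasurableSet {A : Einf | A.1 i j} := by
  have : {A : Einf | A.1 i j} =
      ⋃ n, ({A : Einf | toCS A n i = true} ∩ {A : Einf | toCS A n j = true}) := by
    ext A
    simp [rel_iff]
  rw [this]
  exact MeasurableSet.iUnion fun n => (measurableSet_toCS n i).inter (measurableSet_toCS n j)

theorem measurable_rowMap : Measurable rowMap := by
  refine measurable_pi_iff.2 fun k => measurable_pi_iff.2 fun m => measurable_to_bool ?_
  have : (fun A : Einf => rowMap A k m) ⁻¹' {true} =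
      (⋂ j, ({A : Einf | A.1 j k}ᶜ ∪ {_A : Einf | k ≤ j})) ∩ {A : Einf | A.1 m k} := by
    ext A
    simp [rowMap_iff, IsMinRep, imp_iff_not_or]
  rw [this]
  exact (MeasurableSet.iInter fun j => (measurableSet_rel j k).compl.union
    (MeasurableSet.const _)).inter (measurableSet_rel m k)

theorem exists_index (D : Einf) : ∃ (idx b : ℕ → ℕ), StrictMono b ∧ (∀ n, idx (b n) = n) ∧
    (∀ i, b (idx i) ≤ i) ∧ ∀ i j, D.1 i j → idx i = idx j := by
  have h : ∀ i, ∃ n, D.1 (D.mu n) i ∧ D.mu n ≤ i := by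
    intro i
    obtain ⟨k, hk, hk', hle⟩ := exists_minRep D i
    obtain ⟨n, rfl⟩ := exists_mu D hk'
    exact ⟨n, hk, hle⟩
  choose idx h1 h2 using h
  have key : ∀ i j, D.1 (D.mu i) (D.mu j) → i = j := fun i j hij =>
    (mu_strictMono D).injective (minRep_unique D (mu_minRep D i) (mu_minRep D j) hij)
  exact ⟨idx, D.mu, mu_strictMono D, fun n => key _ _ (h1 _), h2, fun i j hij =>
    key _ _ (D.1.trans (D.1.trans (h1 i) hij) (D.1.symm (h1 j)))⟩

/-- The class index assigned to the `i`-th class of `D`. -/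
noncomputable def col (x : ℕ → ℕ → Bool) (i : ℕ) : ℕ :=
  if i.unpair.2 = 0 ∨ x i.unpair.1 (i.unpair.2 - 1) = true then i.unpair.1 else 0

theorem col_base (x : ℕ → ℕ → Bool) (n : ℕ) : col x (Nat.pair n 0) = n := by
  simp [col]

theorem col_eq_iff (x : ℕ → ℕ → Bool) (n m : ℕ) (hn : 0 < n) :
    col x (Nat.pair n (m + 1)) = n ↔ x n m = true := by
  simp only [col, Nat.unpair_pair, Nat.add_sub_cancel, Nat.succ_ne_zero, false_or]
  split_ifs with h
  · simp [h]
  · simp only [h]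
    constructor
    · intro h0; omega
    · intro h0; simp at h0

theorem col_le (x : ℕ → ℕ → Bool) (i : ℕ) : Nat.pair (col x i) 0 ≤ i := by
  unfold col
  split_ifs
  · conv_rhs => rw [← Nat.pair_unpair i]
    rcases Nat.eq_zero_or_pos i.unpair.2 with h | h
    · rw [h]
    · exact (Nat.pair_lt_pair_right _ h).le
  · simp [Nat.pair]

theorem col_congr {x y : ℕ → ℕ → Bool} {n : ℕ} (hn : 0 < n) (h : ∀ m, x n m = y n m) (i : ℕ)
    (hx : col x i = n) : col y i = n := by
  unfold col at hx ⊢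
  split_ifs at hx with h1
  · subst hx
    rw [h] at h1
    rw [if_pos h1]
  · omega

theorem measurable_col (i : ℕ) : Measurable fun x => col x i := by
  unfold col
  refine Measurable.ite ?_ measurable_const measurable_const
  refine (MeasurableSet.const _).union ?_
  have : Measurable fun x : ℕ → ℕ → Bool => x i.unpair.1 (i.unpair.2 - 1) := by fun_prop
  exact this (measurableSet_singleton true)

/-- The coarsening coded by `x`. -/
noncomputable def coarse (idx b : ℕ → ℕ) (hb : ∀ n, idx (b n) = n) (x : ℕ → ℕ → Bool) : Einf :=
  ⟨Setoid.ker fun i => col x (idx i), by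
    refine Infinite.of_surjective
      (Quotient.lift (s := Setoid.ker fun i => col x (idx i)) (fun i => col x (idx i))
        (fun _ _ h => h)) ?_
    intro n
    refine ⟨Quotient.mk _ (b (Nat.pair n 0)), ?_⟩
    simp [hb, col_base]⟩

theorem coarse_rel (idx b : ℕ → ℕ) (hb : ∀ n, idx (b n) = n) (x : ℕ → ℕ → Bool) (i j : ℕ) :
    (coarse idx b hb x).1 i j ↔ col x (idx i) = col x (idx j) := Iff.rfl

theorem coarse_minRep (idx b : ℕ → ℕ) (hb : ∀ n, idx (b n) = n) (hm : StrictMono b)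
    (hle : ∀ i, b (idx i) ≤ i) (x : ℕ → ℕ → Bool) (k : ℕ) :
    IsMinRep (coarse idx b hb x) k ↔ ∃ n, k = b (Nat.pair n 0) := by
  have hmin : ∀ i, b (Nat.pair (col x (idx i)) 0) ≤ i := fun i =>
    (hm.monotone (col_le x _)).trans (hle i)
  constructor
  · intro h
    refine ⟨col x (idx k), le_antisymm (h _ ?_) (hmin k)⟩
    rw [coarse_rel, hb, col_base]
  · rintro ⟨n, rfl⟩ m hmm
    rw [coarse_rel, hb, col_base] at hmm
    rw [← hmm]
    exact hmin m

theorem coarse_E1 (idx b : ℕ → ℕ) (hb : ∀ n, idx (b n) = n) (hm : StrictMono b)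
    (hle : ∀ i, b (idx i) ≤ i) (x y : ℕ → ℕ → Bool) :
    E1 x y ↔ E1 (rowMap (coarse idx b hb x)) (rowMap (coarse idx b hb y)) := by
  constructor
  · rintro ⟨n₀, h⟩
    refine ⟨b (Nat.pair (n₀ + 1) 0), fun k m => ?_⟩
    rw [Bool.eq_iff_iff, rowMap_iff, rowMap_iff, coarse_minRep idx b hb hm hle,
      coarse_minRep idx b hb hm hle]
    refine and_congr_right ?_
    rintro ⟨n, hn⟩
    rw [hn, coarse_rel, coarse_rel, hb, col_base, col_base]
    have hlt : n₀ + 1 ≤ n := by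
      by_contra hc
      have := hm (Nat.pair_lt_pair_left 0 (not_le.1 hc))
      omega
    have hxy : ∀ m, x n m = y n m := by
      intro m
      have := h (n - n₀) m
      rwa [Nat.add_sub_cancel' (by omega)] at this
    exact ⟨col_congr (by omega) hxy _, col_congr (by omega) (fun m => (hxy m).symm) _⟩
  · rintro ⟨K, h⟩
    refine ⟨K + 1, fun n m => ?_⟩
    have hK : K ≤ b (Nat.pair (K + 1 + n) 0) := by
      have h1 := hm.le_apply (x := Nat.pair (K + 1 + n) 0)
      have h2 := Nat.left_le_pair (K + 1 + n) 0
      omega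
    obtain ⟨j, hj⟩ := Nat.exists_eq_add_of_le hK
    have := h j (b (Nat.pair (K + 1 + n) (m + 1)))
    rw [← hj, Bool.eq_iff_iff, rowMap_iff, rowMap_iff, coarse_minRep idx b hb hm hle,
      coarse_minRep idx b hb hm hle, and_iff_right ⟨_, rfl⟩, and_iff_right ⟨_, rfl⟩,
      coarse_rel, coarse_rel, hb, hb, col_base, col_base, col_eq_iff _ _ _ (by omega),
      col_eq_iff _ _ _ (by omega)] at this
    rwa [Bool.eq_iff_iff]

theorem measurable_coarse (idx b : ℕ → ℕ) (hb : ∀ n, idx (b n) = n) (hm : StrictMono b)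
    (hle : ∀ i, b (idx i) ≤ i) : Measurable (coarse idx b hb) := by
  refine measurable_comap_iff.2 ?_
  refine measurable_pi_iff.2 fun n => measurable_pi_iff.2 fun m => measurable_to_bool ?_
  have hmu : ∀ x, (coarse idx b hb x).mu n = Nat.nth (fun k => ∃ n, k = b (Nat.pair n 0)) n := by
    intro x
    rw [mu_eq]
    congr 1
    funext k
    exact propext (coarse_minRep idx b hb hm hle x k)
  have : (fun x => (toCS ∘ coarse idx b hb) x n m) ⁻¹' {true} =
      {x | col x (idx m) =
        col x (idx (Nat.nth (fun k => ∃ n, k = b (Nat.pair n 0)) n))} := by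
    ext x
    simp only [Set.mem_preimage, Set.mem_singleton_iff, Function.comp, toCS_iff, hmu, coarse_rel,
      Set.mem_setOf_eq]
  rw [this]
  exact measurableSet_eq_fun (measurable_col _) (measurable_col _)

/-- For every `D ∈ 𝓔_∞`, the restriction of `E₁^tail` (transported to `𝓔_∞` via the
identification with `𝓒𝓢`) to the cube `[∅,D] = {A : A ≤ D}` is Borel bireducible with
`E₁` on `2^{ℕ×ℕ}`. -/
theorem E1tail_on_cube_bireducible_E1 (D : Einf) :
    (∃ f : {A : Einf // Coarsen A D} → (ℕ → ℕ → Bool), Measurable f ∧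
      ∀ A A' : {A : Einf // Coarsen A D},
        (E1tail (toCS A.1) (toCS A'.1) ↔ E1 (f A) (f A'))) ∧
    (∃ g : (ℕ → ℕ → Bool) → {A : Einf // Coarsen A D}, Measurable g ∧
      ∀ x y : ℕ → ℕ → Bool, (E1 x y ↔ E1tail (toCS (g x).1) (toCS (g y).1))) := by
  refine ⟨⟨fun A => rowMap A.1, measurable_rowMap.comp measurable_subtype_coe,
    fun A A' => E1tail_iff_rowMap A.1 A'.1⟩, ?_⟩
  obtain ⟨idx, b, hm, hb, hle, hD⟩ := exists_index D
  refine ⟨fun x => ⟨coarse idx b hb x, fun i j hij => ?_⟩,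
    (measurable_coarse idx b hb hm hle).subtype_mk, fun x y => ?_⟩
  · rw [coarse_rel, hD i j hij]
  · exact (coarse_E1 idx b hb hm hle x y).trans (E1tail_iff_rowMap _ _).symm
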